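/- Let G = (V, E) be a finite directed graph with nonnegative real edge weights w. There exists ε₀ > 0 such that for every 0 < ε ≤ ε₀, defining perturbed weights w_ε(e) = w(e) + ε for every edge e, the following holds for every pair of nodes s, t with t reachable from s: a path P from s to t is a shortest path under w_ε if and only if P is a shortest path under w having the minimum number of edges among all shortest s–t paths under w. In particular, under w_ε all shortest paths between any fixed pair of nodes have the same number of edges. -/

import Mathlib

/-- `IsWalk E l s t`: the nonempty list `l` is the node sequence of a walk from `s` to `t`
in the directed graph with edge relation `E`. -/
def IsWalk {V : Type*} (E : V → V → Prop) (l : List V) (s t : V) : Prop :=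
  l ≠ [] ∧ l.head? = some s ∧ l.getLast? = some t ∧ l.Chain' E

/-- The length (total weight) of a walk with node sequence `l` under edge weights `w`. -/
def walkLen {V : Type*} (w : V → V → ℝ) (l : List V) : ℝ :=
  ((l.zip l.tail).map fun e => w e.1 e.2).sum

/-- `edist E w s t`: the distance from `s` to `t`, i.e. the infimum of the lengths of all
walks from `s` to `t` (`⊤` if there is none). -/
noncomputable def edist {V : Type*} (E : V → V → Prop) (w : V → V → ℝ) (s t : V) : EReal :=
  sInf {x : EReal | ∃ l : List V, IsWalk E l s t ∧ x = (walkLen w l : ℝ)}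

theorem walkLen_cons_cons {V : Type*} (w : V → V → ℝ) (a b : V) (l : List V) :
    walkLen w (a :: b :: l) = w a b + walkLen w (b :: l) := by
  simp [walkLen]

theorem walkLen_single {V : Type*} (w : V → V → ℝ) (a : V) : walkLen w [a] = 0 := by
  simp [walkLen]

theorem walkLen_eps {V : Type*} (w : V → V → ℝ) (ε : ℝ) (l : List V) (hl : l ≠ []) :
    walkLen (fun u z => w u z + ε) l = walkLen w l + ε * ((l.length : ℝ) - 1) := by
  induction l with
  | nil => exact absurd rfl hl
  | cons a l ih =>
    cases l with
    | nil => simp [walkLen_single]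
    | cons b l =>
      rw [walkLen_cons_cons, walkLen_cons_cons, ih (by simp)]
      simp only [List.length_cons]
      push_cast
      ring

theorem isWalk_single {V : Type*} (E : V → V → Prop) (a : V) : IsWalk E [a] a a := by
  simp [IsWalk, List.Chain']

theorem isWalk_cons_cons {V : Type*} (E : V → V → Prop) (a b s t : V) (l : List V) :
    IsWalk E (a :: b :: l) s t ↔ a = s ∧ E a b ∧ IsWalk E (b :: l) b t := by
  simp only [IsWalk, List.Chain', List.isChain_cons_cons, List.head?_cons, List.getLast?_cons_cons]
  simp
  tauto

theorem walk_suffix {V : Type*} (E : V → V → Prop) (w : V → V → ℝ)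
    (hw : ∀ u z, E u z → 0 ≤ w u z) (p q : List V) (x s t : V)
    (h : IsWalk E (p ++ x :: q) s t) :
    IsWalk E (x :: q) x t ∧ walkLen w (x :: q) ≤ walkLen w (p ++ x :: q) := by
  induction p generalizing s with
  | nil =>
    have hs : x = s := by simpa using h.2.1
    subst hs
    exact ⟨h, le_refl _⟩
  | cons a p ih =>
    obtain ⟨b, r, hbr⟩ : ∃ b r, p ++ x :: q = b :: r := by
      cases p with
      | nil => exact ⟨_, _, rfl⟩
      | cons b p => exact ⟨_, _, rfl⟩
    rw [List.cons_append, hbr, isWalk_cons_cons] at h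
    rw [hbr] at ih
    obtain ⟨h1, h2⟩ := ih b h.2.2
    refine ⟨h1, ?_⟩
    rw [List.cons_append, hbr, walkLen_cons_cons]
    have := hw _ _ h.2.1
    linarith

theorem walk_reduce {V : Type*} (E : V → V → Prop) (w : V → V → ℝ)
    (hw : ∀ u z, E u z → 0 ≤ w u z) (l : List V) (s t : V) (h : IsWalk E l s t) :
    ∃ l', IsWalk E l' s t ∧ l'.Nodup ∧ l'.length ≤ l.length ∧ walkLen w l' ≤ walkLen w l := by
  induction l generalizing s with
  | nil => exact absurd rfl h.1
  | cons a l ih =>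
    cases l with
    | nil => exact ⟨[a], h, by simp, le_refl _, le_refl _⟩
    | cons b l =>
      rw [isWalk_cons_cons] at h
      obtain ⟨rfl, hab, hb⟩ := h
      have h0 := hw _ _ hab
      obtain ⟨l', h1, h2, h3, h4⟩ := ih b hb
      by_cases ha : a ∈ l'
      · obtain ⟨p, q, rfl⟩ := List.append_of_mem ha
        obtain ⟨h5, h6⟩ := walk_suffix E w hw p q a b t h1
        refine ⟨a :: q, h5, (List.nodup_append.1 h2).2.1, ?_, ?_⟩
        · simp only [List.length_append, List.length_cons] at h3 ⊢
          omega
        · rw [walkLen_cons_cons]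
          linarith
      · cases l' with
        | nil => exact absurd rfl h1.1
        | cons c r =>
          have hc : c = b := by simpa using h1.2.1
          subst hc
          refine ⟨a :: c :: r, (isWalk_cons_cons _ _ _ _ _ _).2 ⟨rfl, hab, h1⟩,
            List.nodup_cons.2 ⟨ha, h2⟩, ?_, ?_⟩
          · simp only [List.length_cons] at h3 ⊢
            omega
          · rw [walkLen_cons_cons, walkLen_cons_cons]
            linarith

theorem finite_nodup (V : Type*) [Fintype V] : {l : List V | l.Nodup}.Finite :=
  (List.finite_length_le V (Fintype.card V)).subset fun _ hl => List.Nodup.length_le_card hl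

theorem exists_gap (D : Set ℝ) (hD : D.Finite) :
    ∃ δ : ℝ, 0 < δ ∧ ∀ a ∈ D, ∀ b ∈ D, a < b → δ ≤ b - a := by
  let T : Set ℝ := insert 1 ((fun p : ℝ × ℝ => p.2 - p.1) '' ((D ×ˢ D) ∩ {p | p.1 < p.2}))
  have hT : T.Finite := (((hD.prod hD).inter_of_left _).image _).insert 1
  obtain ⟨δ, hδ, hmin⟩ := Set.exists_min_image T id hT ⟨1, Set.mem_insert _ _⟩
  refine ⟨δ, ?_, fun a ha b hb hab => ?_⟩
  · rcases hδ with rfl | ⟨p, hp, rfl⟩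
    · norm_num
    · exact sub_pos.2 hp.2
  · exact hmin (b - a) (Or.inr ⟨(a, b), ⟨⟨ha, hb⟩, hab⟩, rfl⟩)

theorem edist_eq_of_min {V : Type*} (E : V → V → Prop) (w : V → V → ℝ) (s t : V) (R : List V)
    (hR : IsWalk E R s t) (h : ∀ Q, IsWalk E Q s t → walkLen w R ≤ walkLen w Q) :
    edist E w s t = (walkLen w R : ℝ) := by
  apply le_antisymm
  · exact sInf_le ⟨R, hR, rfl⟩
  · apply le_sInf
    rintro x ⟨Q, hQ, rfl⟩
    exact EReal.coe_le_coe_iff.2 (h Q hQ)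

/-- For a finite directed graph with nonnegative weights there is `ε₀ > 0`
such that for all `0 < ε ≤ ε₀` and all reachable pairs `s, t`: a walk `P` from `s` to `t`
is shortest under the perturbed weights `w + ε` iff it is a shortest walk under `w` with the
minimum number of edges among all shortest `s`–`t` walks under `w`; in particular under
`w + ε` all shortest walks between a fixed pair have the same number of edges. -/
theorem stmt10 {V : Type} [Fintype V]
    (E : V → V → Prop) (w : V → V → ℝ) (hw : ∀ u z, E u z → 0 ≤ w u z) :
    ∃ ε₀ : ℝ, 0 < ε₀ ∧ ∀ ε : ℝ, 0 < ε → ε ≤ ε₀ →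
      ∀ s t : V, (∃ l, IsWalk E l s t) →
        (∀ P : List V, IsWalk E P s t →
          (((walkLen (fun u z => w u z + ε) P : EReal) =
              edist E (fun u z => w u z + ε) s t) ↔
            ((walkLen w P : EReal) = edist E w s t ∧
              ∀ Q : List V, IsWalk E Q s t → (walkLen w Q : EReal) = edist E w s t →
                P.length ≤ Q.length))) ∧
        (∀ P Q : List V, IsWalk E P s t → IsWalk E Q s t →
          (walkLen (fun u z => w u z + ε) P : EReal) = edist E (fun u z => w u z + ε) s t →
          (walkLen (fun u z => w u z + ε) Q : EReal) = edist E (fun u z => w u z + ε) s t →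
          P.length = Q.length) := by
  obtain ⟨δ, hδ, hgap⟩ := exists_gap (walkLen w '' {l : List V | l.Nodup})
    ((finite_nodup V).image _)
  have hn : (0 : ℝ) < (Fintype.card V : ℝ) + 1 := by positivity
  refine ⟨δ / ((Fintype.card V : ℝ) + 1), by positivity, ?_⟩
  intro ε hε hε' s t ⟨l₀, hl₀⟩
  rw [le_div_iff₀ hn] at hε'
  obtain ⟨l₁, hl₁, hl₁n, -, -⟩ := walk_reduce E w hw l₀ s t hl₀
  obtain ⟨R, ⟨hRn, hR⟩, hmin⟩ := Set.exists_min_image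
    ({l : List V | l.Nodup} ∩ {l | IsWalk E l s t})
    (fun l => toLex (walkLen w l, l.length)) ((finite_nodup V).inter_of_left _) ⟨l₁, hl₁n, hl₁⟩
  have hRc : (R.length : ℝ) ≤ Fintype.card V := by
    exact_mod_cast List.Nodup.length_le_card hRn
  have key : ∀ Q, IsWalk E Q s t → walkLen w R ≤ walkLen w Q ∧
      ((walkLen w R = walkLen w Q ∧ R.length ≤ Q.length) ∨
        (walkLen w R < walkLen w Q ∧
          walkLen w R + ε * (R.length : ℝ) < walkLen w Q + ε * (Q.length : ℝ))) := by
    intro Q hQ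
    obtain ⟨Q', hQ', hn', hlen, hle⟩ := walk_reduce E w hw Q s t hQ
    have hm := hmin Q' ⟨hn', hQ'⟩
    simp only [Prod.Lex.toLex_le_toLex] at hm
    have hQ0 : (0 : ℝ) ≤ ε * (Q.length : ℝ) := by positivity
    have hlenr : (Q'.length : ℝ) ≤ Q.length := by exact_mod_cast hlen
    rcases hm with hlt | ⟨heq, hl⟩
    · have hg := hgap _ ⟨R, hRn, rfl⟩ _ ⟨Q', hn', rfl⟩ hlt
      refine ⟨by linarith, Or.inr ⟨by linarith, ?_⟩⟩
      nlinarith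
    · refine ⟨by linarith, ?_⟩
      rcases (heq.le.trans hle).eq_or_lt with h | h
      · exact Or.inl ⟨h, hl.trans hlen⟩
      · refine Or.inr ⟨h, ?_⟩
        have : (R.length : ℝ) ≤ Q.length := by exact_mod_cast hl.trans hlen
        nlinarith
  have e1 : edist E w s t = (walkLen w R : ℝ) :=
    edist_eq_of_min E w s t R hR fun Q hQ => (key Q hQ).1
  have e2 : edist E (fun u z => w u z + ε) s t =
      (walkLen (fun u z => w u z + ε) R : ℝ) := by
    refine edist_eq_of_min E _ s t R hR fun Q hQ => ?_
    rw [walkLen_eps _ _ _ hR.1, walkLen_eps _ _ _ hQ.1]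
    rcases (key Q hQ).2 with ⟨h1, h2⟩ | ⟨-, h⟩
    · have : (R.length : ℝ) ≤ Q.length := by exact_mod_cast h2
      nlinarith
    · linarith
  have main : ∀ P, IsWalk E P s t → (((walkLen (fun u z => w u z + ε) P : ℝ) : EReal) =
      edist E (fun u z => w u z + ε) s t ↔
        walkLen w P = walkLen w R ∧ P.length = R.length) := by
    intro P hP
    rw [e2, EReal.coe_eq_coe_iff, walkLen_eps _ _ _ hR.1, walkLen_eps _ _ _ hP.1]
    constructor
    · intro h
      rcases (key P hP).2 with ⟨h1, h2⟩ | ⟨-, h3⟩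
      · refine ⟨h1.symm, ?_⟩
        rw [h1] at h
        have h4 := mul_left_cancel₀ hε.ne' (add_left_cancel h)
        have h5 : (P.length : ℝ) = R.length := by linarith
        exact_mod_cast h5
      · exfalso
        linarith
    · rintro ⟨h1, h2⟩
      rw [h1, h2]
  refine ⟨fun P hP => ?_, fun P Q hP hQ h1 h2 => ?_⟩
  · rw [main P hP, e1]
    simp only [EReal.coe_eq_coe_iff]
    constructor
    · rintro ⟨h1, h2⟩
      refine ⟨h1, fun Q hQ hQR => ?_⟩
      rcases (key Q hQ).2 with ⟨-, h3⟩ | ⟨h3, -⟩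
      · omega
      · exact absurd hQR h3.ne'
    · rintro ⟨h1, h2⟩
      refine ⟨h1, le_antisymm (h2 R hR rfl) ?_⟩
      rcases (key P hP).2 with ⟨-, h3⟩ | ⟨h3, -⟩
      · exact h3
      · exact absurd h1 h3.ne'
  · rw [((main P hP).1 h1).2, ((main Q hQ).1 h2).2]
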